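/- Let d ≥ 1, D := {1,...,d}, let B ⊆ D be nonempty, and let Q be a Young function such that L_Q(I^d) is not contained in L log^{|B|} L(I^d). Then there exists a function f ∈ L_Q(I^d) such that (L_{n(B)}∘R_{n(B')})(f) does not converge to f in L^1(I^d)-norm as n → ∞, where n(B) denotes the index vector all of whose coordinates equal n. -/

import Mathlib

open MeasureTheory Filter

noncomputable section

/-- The unit cube `[0,1)^d`. -/
def unitCube (d : ℕ) : Set (Fin d → ℝ) := Set.univ.pi fun _ => Set.Ico (0:ℝ) 1

/-- Lebesgue measure restricted to the unit cube `[0,1)^d`. -/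
def cubeMeasure (d : ℕ) : Measure (Fin d → ℝ) := volume.restrict (unitCube d)

/-- The `1`-periodic function equal to `1` on `[0,1/2)` and to `-1` on `[1/2,1)`. -/
def r0 (x : ℝ) : ℝ := if Int.fract x < 1/2 then 1 else -1

/-- The Rademacher functions. -/
def rademacher (n : ℕ) (x : ℝ) : ℝ := r0 (2 ^ n * x)

/-- The Walsh functions (in Paley enumeration, via binary digits). -/
def walsh (n : ℕ) (x : ℝ) : ℝ :=
  ∏ k ∈ Finset.range (n + 1), if n.testBit k then rademacher k x else 1

/-- The Walsh–Dirichlet kernel `D_n`. -/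
def dirichletKernel (n : ℕ) (x : ℝ) : ℝ := ∑ k ∈ Finset.range n, walsh k x

/-- `l_n = ∑_{k=1}^{n-1} 1/k`. -/
def logSum (n : ℕ) : ℝ := ∑ k ∈ Finset.Icc 1 (n - 1), (1 : ℝ) / k

/-- The Nörlund logarithmic kernel `F_n`. -/
def FKernel (n : ℕ) (u : ℝ) : ℝ :=
  (1 / logSum n) * ∑ i ∈ Finset.Ico 1 n, dirichletKernel (n - i) u / i

/-- The Riesz logarithmic kernel `G_n`. -/
def GKernel (n : ℕ) (u : ℝ) : ℝ :=
  (1 / logSum n) * ∑ i ∈ Finset.Ico 1 n, dirichletKernel i u / i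

/-- Walsh–Fourier coefficient of `f` on the unit cube. -/
def walshCoef {d : ℕ} (f : (Fin d → ℝ) → ℝ) (j : Fin d → ℕ) : ℝ :=
  ∫ x, f x * ∏ i, walsh (j i) (x i) ∂(cubeMeasure d)

/-- Rectangular partial sums of the multiple Walsh–Fourier series. -/
def rectPartialSum {d : ℕ} (f : (Fin d → ℝ) → ℝ) (N : Fin d → ℕ) (x : Fin d → ℝ) : ℝ :=
  ∑ j ∈ Fintype.piFinset (fun i => Finset.range (N i)),
    walshCoef f j * ∏ i, walsh (j i) (x i)

/-- The mixed logarithmic means `(L_{n_B} ∘ R_{n_{B'}})(f)`. -/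
def mixedLogMean {d : ℕ} (B : Finset (Fin d)) (f : (Fin d → ℝ) → ℝ)
    (n : Fin d → ℕ) (x : Fin d → ℝ) : ℝ :=
  (∏ j, logSum (n j))⁻¹ *
    ∑ i ∈ Fintype.piFinset (fun j => Finset.Ico 1 (n j)),
      rectPartialSum f (fun j => if j ∈ B then n j - i j else i j) x / ∏ j, (i j : ℝ)

/-- A Young function: convex, continuous, even, vanishing at `0`, with
`Q(u)/u → ∞` at `+∞` and `Q(u)/u → 0` at `0`. -/
structure YoungFunction where
  toFun : ℝ → ℝ
  nonneg : ∀ u, 0 ≤ toFun u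
  convexOn : ConvexOn ℝ Set.univ toFun
  continuous : Continuous toFun
  even : ∀ u, toFun (-u) = toFun u
  map_zero : toFun 0 = 0
  tendsto_atTop : Tendsto (fun u => toFun u / u) atTop atTop
  tendsto_zero : Tendsto (fun u => toFun u / u) (nhdsWithin 0 {(0:ℝ)}ᶜ) (nhds 0)

/-- The set of admissible constants `k` in the Luxemburg norm of `f`. -/
def orliczSet {d : ℕ} (Q : YoungFunction) (f : (Fin d → ℝ) → ℝ) : Set ℝ :=
  {k | 0 < k ∧ Integrable (fun x => Q.toFun (|f x| / k)) (cubeMeasure d) ∧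
    ∫ x, Q.toFun (|f x| / k) ∂(cubeMeasure d) ≤ 1}

/-- `f` belongs to the Orlicz space `L_Q(I^d)`. -/
def MemOrlicz {d : ℕ} (Q : YoungFunction) (f : (Fin d → ℝ) → ℝ) : Prop :=
  Measurable f ∧ (orliczSet Q f).Nonempty

/-- The Luxemburg norm on the Orlicz space `L_Q(I^d)`. -/
def orliczNorm {d : ℕ} (Q : YoungFunction) (f : (Fin d → ℝ) → ℝ) : ℝ :=
  sInf (orliczSet Q f)

/-- `p_n = 2^{2n} + 2^{2n-2} + ⋯ + 2^0`. -/
def pIdx (n : ℕ) : ℕ := ∑ k ∈ Finset.range (n + 1), 4 ^ k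

/-- `m̃ = ⌊ l_{p_{⌊m/2⌋}-1}/16 - 2^15 ⌋`. -/
def mTilde (m : ℕ) : ℤ := ⌊logSum (pIdx (m / 2) - 1) / 16 - 2 ^ 15⌋

/-- `m₀ = min{m : m̃ > 1}`. -/
def m₀ : ℕ := sInf {m : ℕ | 1 < mTilde m}

/-- The set `Ω_n`. -/
def Omega (n : ℕ) : Set ℝ :=
  ⋃ m ∈ Finset.Icc n (2 * n),
    Set.Ico ((2:ℝ) ^ (-(m:ℤ) - 1) + (2:ℝ) ^ (-(m:ℤ) - mTilde m)) ((2:ℝ) ^ (-(m:ℤ)))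

/-- `k`-th binary digit of `x` (the expansion not terminating in `1`'s). -/
def binDigit (k : ℕ) (x : ℝ) : ℕ := (⌊x * 2 ^ (k + 1)⌋).toNat % 2

/-- Dyadic addition on `[0,1)`. -/
def dyadicAdd (x t : ℝ) : ℝ :=
  ∑' k : ℕ, |(binDigit k x : ℝ) - (binDigit k t : ℝ)| / 2 ^ (k + 1)

/-- Dyadic convolution `f ∗ K` on `[0,1)`. -/
def dyadicConv (f K : ℝ → ℝ) (x : ℝ) : ℝ :=
  ∫ t in Set.Ico (0:ℝ) 1, f t * K (dyadicAdd x t)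

/-- Lebesgue measure restricted to `[0,1)`. -/
def unitMeasure : Measure ℝ := volume.restrict (Set.Ico (0:ℝ) 1)

/-- A set `A ⊆ L_Q(I^d)` is nowhere dense w.r.t. the Luxemburg norm. -/
def OrliczNowhereDense {d : ℕ} (Q : YoungFunction) (A : Set ((Fin d → ℝ) → ℝ)) : Prop :=
  ∀ f, MemOrlicz Q f → ∀ ε > 0, ∃ g, MemOrlicz Q g ∧ ∃ δ > 0,
    (∀ h, MemOrlicz Q h → orliczNorm Q (h - g) < δ → orliczNorm Q (h - f) < ε) ∧
    (∀ h, MemOrlicz Q h → orliczNorm Q (h - g) < δ → h ∉ A)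

/-- A set `A ⊆ L_Q(I^d)` is of first Baire category (meager) w.r.t. the Luxemburg norm. -/
def OrliczMeager {d : ℕ} (Q : YoungFunction) (A : Set ((Fin d → ℝ) → ℝ)) : Prop :=
  ∃ F : ℕ → Set ((Fin d → ℝ) → ℝ), (∀ k, OrliczNowhereDense Q (F k)) ∧ A ⊆ ⋃ k, F k

/-!
A function concentrated on a dyadic cube of side `2 ^ (-m)` at the origin has all its low
Walsh coefficients equal to its integral, so its mixed mean of order `n ≤ 2 ^ m` is that integral
times a product of one-dimensional kernels: `F_n` in the directions of `B`, `G_n` in the others.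
For `n = p_N = 4 ^ N + ⋯ + 1` the kernel `F_n` has `L¹`-norm at least `N / 48`: the binary digits
of `p_N` alternate, and on every second dyadic block `[2 ^ (-m - 1), 2 ^ (-m))` the Dirichlet
kernels of index close to `p_N` share one Walsh factor, so that they add up instead of cancelling.
The norm of `G_n` is at least `1`, and hence the mean of a peak of mass `1` and side `4 ^ (-N - 1)`
has norm at least `(N / 48) ^ |B|`.

If `L_Q` is not contained in `L log^{|B|} L`, then `Q u < c u log^{|B|} (1 + u)` for arbitrarily
large `u`, whatever `c > 0`. Peaks of such heights on cubes of suitable size are small in `L_Q` but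
have large means, and a gliding hump stacks them: with respect to each peak the rest of the function
is bounded, and by Bessel's inequality the means of a function bounded by `t` have `L¹`-norm at
most `t`. The means of the resulting function are unbounded in `L¹`.
-/

/-! ### Walsh functions -/

lemma walsh_eq_prod_range {n K : ℕ} (hn : n < 2 ^ K) (x : ℝ) :
    walsh n x = ∏ k ∈ Finset.range K, if n.testBit k then rademacher k x else 1 := by
  have mulSupport_subset : ∀ L, n < 2 ^ L →
      (Function.mulSupport fun k => if n.testBit k then rademacher k x else 1) ⊆
        ↑(Finset.range L) := by
    intro L hL k hk
    by_contra hkL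
    have hLk : L ≤ k := by simpa using hkL
    have hbit : n.testBit k = false :=
      Nat.testBit_lt_two_pow (hL.trans_le (Nat.pow_le_pow_right two_pos hLk))
    simp [hbit] at hk
  have hn' : n < 2 ^ (n + 1) := Nat.lt_two_pow_self.trans (Nat.pow_lt_pow_succ one_lt_two)
  rw [walsh, ← finprod_eq_prod_of_mulSupport_subset _ (mulSupport_subset _ hn'),
    ← finprod_eq_prod_of_mulSupport_subset _ (mulSupport_subset _ hn)]

lemma rademacher_add (m k : ℕ) (x : ℝ) : rademacher (m + k) x = rademacher k (2 ^ m * x) := by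
  simp only [rademacher, pow_add, mul_assoc, mul_left_comm]

lemma walsh_two_pow_mul_add (m q : ℕ) {r : ℕ} (hr : r < 2 ^ m) (x : ℝ) :
    walsh (2 ^ m * q + r) x = walsh r x * walsh q (2 ^ m * x) := by
  have hq : q < 2 ^ q := Nat.lt_two_pow_self
  have hlt : 2 ^ m * q + r < 2 ^ (m + q) := by
    rw [pow_add]
    nlinarith
  rw [walsh_eq_prod_range hlt, walsh_eq_prod_range hr, walsh_eq_prod_range hq,
    Finset.prod_range_add]
  congr 1 <;> refine Finset.prod_congr rfl fun k hk => ?_ <;>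
    rw [Nat.testBit_two_pow_mul_add _ hr]
  · simp [Finset.mem_range.mp hk]
  · simp [rademacher_add]

lemma walsh_zero (x : ℝ) : walsh 0 x = 1 := by simp [walsh]

lemma walsh_one (x : ℝ) : walsh 1 x = r0 x := by
  simp [walsh_eq_prod_range (n := 1) (K := 1) (by norm_num), rademacher]

lemma abs_r0 (x : ℝ) : |r0 x| = 1 := by
  unfold r0
  split_ifs <;> simp

@[fun_prop]
lemma measurable_r0 : Measurable r0 :=
  Measurable.ite (measurableSet_lt measurable_fract measurable_const)
    measurable_const measurable_const

lemma r0_periodic : Function.Periodic r0 1 := fun x => by simp [r0]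

lemma r0_antiperiodic : Function.Antiperiodic r0 (1 / 2) := by
  intro x
  have hx0 := Int.fract_nonneg x
  have hx1 := Int.fract_lt_one x
  have hx := Int.self_sub_floor x
  unfold r0
  by_cases hlt : Int.fract x < 1 / 2
  · have hfract : Int.fract (x + 1 / 2) = Int.fract x + 1 / 2 :=
      Int.fract_eq_iff.mpr ⟨by linarith, by linarith, ⌊x⌋, by linarith⟩
    rw [if_pos hlt, hfract, if_neg (by linarith)]
  · have hfract : Int.fract (x + 1 / 2) = Int.fract x - 1 / 2 :=
      Int.fract_eq_iff.mpr ⟨by linarith, by linarith, ⌊x⌋ + 1, by push_cast; linarith⟩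
    rw [if_neg hlt, hfract, if_pos (by linarith), neg_neg]

lemma abs_rademacher (k : ℕ) (x : ℝ) : |rademacher k x| = 1 := abs_r0 _

@[fun_prop]
lemma measurable_rademacher (k : ℕ) : Measurable (rademacher k) := by
  unfold rademacher
  fun_prop

lemma rademacher_periodic (k : ℕ) : Function.Periodic (rademacher k) 1 := by
  intro x
  have hperiod := r0_periodic.nat_mul (2 ^ k) (2 ^ k * x)
  push_cast at hperiod
  rw [rademacher, rademacher, mul_add, hperiod]

lemma abs_walsh (n : ℕ) (x : ℝ) : |walsh n x| = 1 := by
  rw [walsh, Finset.abs_prod]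
  refine Finset.prod_eq_one fun k _ => ?_
  split_ifs
  · exact abs_rademacher k x
  · exact abs_one

@[fun_prop]
lemma measurable_walsh (n : ℕ) : Measurable (walsh n) := by
  unfold walsh
  refine Finset.measurable_fun_prod _ fun k _ => ?_
  split_ifs <;> fun_prop

lemma walsh_periodic (n : ℕ) : Function.Periodic (walsh n) 1 := by
  intro x
  simp only [walsh, rademacher_periodic _ x]

lemma walsh_mul_walsh (n m : ℕ) (x : ℝ) : walsh n x * walsh m x = walsh (n ^^^ m) x := by
  have hn : n < 2 ^ (n + m) :=
    Nat.lt_two_pow_self.trans_le (Nat.pow_le_pow_right two_pos (by omega))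
  have hm : m < 2 ^ (n + m) :=
    Nat.lt_two_pow_self.trans_le (Nat.pow_le_pow_right two_pos (by omega))
  rw [walsh_eq_prod_range hn, walsh_eq_prod_range hm,
    walsh_eq_prod_range (Nat.xor_lt_two_pow hn hm), ← Finset.prod_mul_distrib]
  refine Finset.prod_congr rfl fun k _ => ?_
  have hsq : rademacher k x * rademacher k x = 1 := by
    rw [← abs_mul_abs_self, abs_rademacher, one_mul]
  cases hnk : n.testBit k <;> cases hmk : m.testBit k <;> simp [hnk, hmk, hsq]

lemma walsh_eq_one_of_mul_lt_one {m r : ℕ} (hr : r < 2 ^ m) {x : ℝ} (hx : 0 ≤ x)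
    (hxm : 2 ^ m * x < 1) : walsh r x = 1 := by
  rw [walsh_eq_prod_range hr]
  refine Finset.prod_eq_one fun k hk => ?_
  have hle : (2 : ℝ) ^ (k + 1) * x ≤ 2 ^ m * x := by
    have hkm : k + 1 ≤ m := Finset.mem_range.mp hk
    gcongr
    norm_num
  have hlt : (2 : ℝ) ^ k * x < 1 / 2 := by
    rw [pow_succ] at hle
    linarith
  have hone : rademacher k x = 1 := by
    rw [rademacher, r0, Int.fract_eq_self.mpr ⟨by positivity, by linarith⟩, if_pos hlt]
  simp [hone]

lemma walsh_antiperiodic_of_odd {k : ℕ} (hk : Odd k) :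
    Function.Antiperiodic (walsh k) (1 / 2) := by
  obtain ⟨q, rfl⟩ := hk
  intro x
  have hsplit : ∀ y, walsh (2 * q + 1) y = r0 y * walsh q (2 * y) := fun y => by
    simpa [walsh_one] using walsh_two_pow_mul_add 1 q (r := 1) (by norm_num) y
  have hshift : 2 * (x + 1 / 2) = 2 * x + 1 := by ring
  rw [hsplit, hsplit, r0_antiperiodic x, hshift, walsh_periodic q, neg_mul]

lemma exists_walsh_antiperiodic {k : ℕ} (hk : k ≠ 0) :
    ∃ c, Function.Antiperiodic (walsh k) c := by
  obtain ⟨j, m, hm, rfl⟩ := Nat.exists_eq_two_pow_mul_odd hk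
  refine ⟨1 / 2 ^ (j + 1), fun x => ?_⟩
  have hscale : ∀ y, walsh (2 ^ j * m) y = walsh m (2 ^ j * y) := fun y => by
    simpa [walsh_zero] using walsh_two_pow_mul_add j m (r := 0) (by positivity) y
  have hshift : (2 : ℝ) ^ j * (x + 1 / 2 ^ (j + 1)) = 2 ^ j * x + 1 / 2 := by
    rw [pow_succ]
    field_simp
  rw [hscale, hscale, hshift, walsh_antiperiodic_of_odd hm]

-- A half-period shift of the lowest Rademacher factor of `walsh k` reverses its sign.
lemma integral_walsh (k : ℕ) (a : ℝ) :
    ∫ x in a..a + 1, walsh k x = if k = 0 then 1 else 0 := by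
  split_ifs with hk
  · simp [hk, walsh_zero]
  · obtain ⟨c, hc⟩ := exists_walsh_antiperiodic hk
    have hneg : ∫ x in a..a + 1, walsh k x = -∫ x in a..a + 1, walsh k x := calc
      ∫ x in a..a + 1, walsh k x = ∫ x in a + c..a + c + 1, walsh k x :=
        (walsh_periodic k).intervalIntegral_add_eq a (a + c)
      _ = ∫ x in a..a + 1, walsh k (x + c) := by
        rw [intervalIntegral.integral_comp_add_right, add_right_comm]
      _ = -∫ x in a..a + 1, walsh k x := by
        simp only [hc _, intervalIntegral.integral_neg]
    linarith

lemma integral_walsh_mul_walsh (n m : ℕ) (a : ℝ) :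
    ∫ x in a..a + 1, walsh n x * walsh m x = if n = m then 1 else 0 := by
  simp only [walsh_mul_walsh, integral_walsh, Nat.xor_eq_zero_iff]

/-! ### Dirichlet and logarithmic kernels -/

lemma intervalIntegrable_of_abs_le {g : ℝ → ℝ} (hg : Measurable g) {C : ℝ}
    (hC : ∀ x, |g x| ≤ C) (a b : ℝ) : IntervalIntegrable g volume a b :=
  (intervalIntegrable_const (c := C)).mono_fun hg.aestronglyMeasurable <|
    Eventually.of_forall fun x => (hC x).trans (le_abs_self C)

@[fun_prop]
lemma measurable_dirichletKernel (n : ℕ) : Measurable (dirichletKernel n) := by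
  unfold dirichletKernel
  fun_prop

lemma abs_dirichletKernel_le (n : ℕ) (x : ℝ) : |dirichletKernel n x| ≤ n := by
  refine (Finset.abs_sum_le_sum_abs _ _).trans ?_
  simp [abs_walsh]

lemma intervalIntegrable_dirichletKernel (n : ℕ) (a b : ℝ) :
    IntervalIntegrable (dirichletKernel n) volume a b :=
  intervalIntegrable_of_abs_le (measurable_dirichletKernel n) (abs_dirichletKernel_le n) a b

lemma dirichletKernel_zero (x : ℝ) : dirichletKernel 0 x = 0 := by simp [dirichletKernel]

lemma dirichletKernel_succ (n : ℕ) (x : ℝ) :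
    dirichletKernel (n + 1) x = dirichletKernel n x + walsh n x :=
  Finset.sum_range_succ _ _

lemma dirichletKernel_two_pow_mul_add (m q : ℕ) {r : ℕ} (hr : r ≤ 2 ^ m) (x : ℝ) :
    dirichletKernel (2 ^ m * q + r) x =
      dirichletKernel (2 ^ m * q) x + dirichletKernel r x * walsh q (2 ^ m * x) := by
  rw [dirichletKernel, Finset.sum_range_add, dirichletKernel, dirichletKernel, Finset.sum_mul]
  congr 1
  refine Finset.sum_congr rfl fun s hs => ?_
  exact walsh_two_pow_mul_add m q ((Finset.mem_range.mp hs).trans_le hr) x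

lemma integral_dirichletKernel {n : ℕ} (hn : 1 ≤ n) :
    ∫ x in (0 : ℝ)..1, dirichletKernel n x = 1 := by
  have hwalsh : ∀ k, IntervalIntegrable (walsh k) volume 0 1 := fun k =>
    intervalIntegrable_of_abs_le (measurable_walsh k) (fun x => (abs_walsh k x).le) 0 1
  have horth : ∀ k, ∫ x in (0 : ℝ)..1, walsh k x = if k = 0 then 1 else 0 := fun k => by
    simpa only [zero_add] using integral_walsh k 0
  simp only [dirichletKernel]
  rw [intervalIntegral.integral_finsetSum fun k _ => hwalsh k]
  simp only [horth, Finset.sum_ite_eq', Finset.mem_range]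
  exact if_pos hn

/-- The tent function of base `[0, L]` and slopes `±1`: the values of the Dirichlet kernels
`D_r`, `r ≤ L = 2 ^ (m + 1)`, on the dyadic block `[2 ^ (-(m + 1)), 2 ^ (-m))`. -/
def tent (L r : ℕ) : ℝ := min (r : ℝ) (L - r)

lemma tent_nonneg {L r : ℕ} (hr : r ≤ L) : 0 ≤ tent L r := by
  have hr' : (r : ℝ) ≤ L := by exact_mod_cast hr
  exact le_min r.cast_nonneg (by linarith)

lemma le_tent {c L r : ℕ} (hc : c ≤ r) (hr : r + c ≤ L) : (c : ℝ) ≤ tent L r := by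
  have hr' : (r : ℝ) + c ≤ L := by exact_mod_cast hr
  exact le_min (by exact_mod_cast hc) (by linarith)

lemma tent_succ_of_two_mul_le {L r : ℕ} (hr : 2 * (r + 1) ≤ L) :
    tent L (r + 1) = tent L r + 1 := by
  have hr' : 2 * ((r : ℝ) + 1) ≤ L := by exact_mod_cast hr
  rw [tent, tent, min_eq_left (by push_cast; linarith), min_eq_left (by linarith)]
  push_cast
  rfl

lemma tent_succ_of_le_two_mul {L r : ℕ} (hr : L ≤ 2 * r) : tent L (r + 1) = tent L r - 1 := by
  have hr' : (L : ℝ) ≤ 2 * r := by exact_mod_cast hr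
  rw [tent, tent, min_eq_right (by push_cast; linarith), min_eq_right (by linarith)]
  push_cast
  ring

section DyadicBlock

variable {m : ℕ} {x : ℝ}

lemma walsh_eq_neg_one_of_mem_block (hx₁ : 1 ≤ 2 ^ (m + 1) * x) (hx₂ : 2 ^ m * x < 1) {r : ℕ}
    (hr₁ : 2 ^ m ≤ r) (hr₂ : r < 2 ^ (m + 1)) : walsh r x = -1 := by
  obtain ⟨s, rfl⟩ := Nat.exists_eq_add_of_le hr₁
  rw [pow_succ] at hx₁ hr₂
  have hhalf : 1 / 2 ≤ 2 ^ m * x := by linarith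
  have hx₀ : 0 ≤ x := by
    refine nonneg_of_mul_nonneg_right (a := 2 ^ m) ?_ (by positivity)
    linarith
  have hs : s < 2 ^ m := by omega
  have hr0 : r0 (2 ^ m * x) = -1 := by
    rw [r0, Int.fract_eq_self.mpr ⟨by positivity, hx₂⟩, if_neg (by linarith)]
  have hsplit := walsh_two_pow_mul_add m 1 hs x
  rwa [mul_one, walsh_eq_one_of_mul_lt_one hs hx₀ hx₂, walsh_one, one_mul, hr0] at hsplit

lemma dirichletKernel_eq_tent (hx₁ : 1 ≤ 2 ^ (m + 1) * x) (hx₂ : 2 ^ m * x < 1) {r : ℕ}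
    (hr : r ≤ 2 ^ (m + 1)) : dirichletKernel r x = tent (2 ^ (m + 1)) r := by
  have hx₀ : 0 ≤ x := nonneg_of_mul_nonneg_right (zero_le_one.trans hx₁) (by positivity)
  induction r with
  | zero => simp [dirichletKernel_zero, tent]
  | succ r ih =>
    rw [dirichletKernel_succ, ih (by omega)]
    rcases lt_or_ge r (2 ^ m) with hlow | hhigh
    · rw [walsh_eq_one_of_mul_lt_one hlow hx₀ hx₂, tent_succ_of_two_mul_le (by omega)]
    · rw [walsh_eq_neg_one_of_mem_block hx₁ hx₂ hhigh (by omega),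
        tent_succ_of_le_two_mul (by omega), sub_eq_add_neg]

lemma dirichletKernel_two_pow_mul_eq_zero (hx₁ : 1 ≤ 2 ^ (m + 1) * x) (hx₂ : 2 ^ m * x < 1)
    (q : ℕ) : dirichletKernel (2 ^ (m + 1) * q) x = 0 := by
  induction q with
  | zero => rw [mul_zero, dirichletKernel_zero]
  | succ q ih =>
    rw [mul_add, mul_one, dirichletKernel_two_pow_mul_add _ _ le_rfl, ih,
      dirichletKernel_eq_tent hx₁ hx₂ le_rfl]
    simp [tent]

lemma dirichletKernel_eq_tent_mul_walsh (hx₁ : 1 ≤ 2 ^ (m + 1) * x) (hx₂ : 2 ^ m * x < 1)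
    (k : ℕ) : dirichletKernel k x =
      tent (2 ^ (m + 1)) (k % 2 ^ (m + 1)) * walsh (k / 2 ^ (m + 1)) (2 ^ (m + 1) * x) := by
  have hlt : k % 2 ^ (m + 1) ≤ 2 ^ (m + 1) := (Nat.mod_lt _ (by positivity)).le
  conv_lhs => rw [← Nat.div_add_mod k (2 ^ (m + 1))]
  rw [dirichletKernel_two_pow_mul_add _ _ hlt, dirichletKernel_two_pow_mul_eq_zero hx₁ hx₂,
    dirichletKernel_eq_tent hx₁ hx₂ hlt, zero_add]

end DyadicBlock

lemma integral_walsh_mul_walsh_block (m p q : ℕ) :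
    ∫ x in (1 / 2 ^ (m + 1) : ℝ)..1 / 2 ^ m,
      walsh p (2 ^ (m + 1) * x) * walsh q (2 ^ (m + 1) * x) =
        if p = q then 1 / 2 ^ (m + 1) else 0 := by
  have hleft : (2 : ℝ) ^ (m + 1) * (1 / 2 ^ (m + 1)) = 1 := by field_simp
  have hright : (2 : ℝ) ^ (m + 1) * (1 / 2 ^ m) = 1 + 1 := by
    rw [pow_succ]
    field_simp
    norm_num
  rw [intervalIntegral.integral_comp_mul_left (fun y => walsh p y * walsh q y) (by positivity),
    hleft, hright, integral_walsh_mul_walsh]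
  split_ifs <;> simp

lemma integral_dirichletKernel_mul_walsh_block (m k q : ℕ) :
    ∫ x in (1 / 2 ^ (m + 1) : ℝ)..1 / 2 ^ m, dirichletKernel k x * walsh q (2 ^ (m + 1) * x) =
      if k / 2 ^ (m + 1) = q then tent (2 ^ (m + 1)) (k % 2 ^ (m + 1)) / 2 ^ (m + 1) else 0 := by
  have hle : (1 / 2 ^ (m + 1) : ℝ) ≤ 1 / 2 ^ m := by gcongr <;> norm_num
  calc ∫ x in (1 / 2 ^ (m + 1) : ℝ)..1 / 2 ^ m, dirichletKernel k x * walsh q (2 ^ (m + 1) * x)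
      = ∫ x in (1 / 2 ^ (m + 1) : ℝ)..1 / 2 ^ m, tent (2 ^ (m + 1)) (k % 2 ^ (m + 1)) *
          (walsh (k / 2 ^ (m + 1)) (2 ^ (m + 1) * x) * walsh q (2 ^ (m + 1) * x)) := by
        refine intervalIntegral.integral_congr_Ioo_of_le hle fun x hx => ?_
        have hx₁ : 1 ≤ 2 ^ (m + 1) * x := ((div_lt_iff₀' (by positivity)).mp hx.1).le
        have hx₂ : 2 ^ m * x < 1 := (lt_div_iff₀' (by positivity)).mp hx.2
        simp only [dirichletKernel_eq_tent_mul_walsh hx₁ hx₂, mul_assoc]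
    _ = _ := by
        rw [intervalIntegral.integral_const_mul, integral_walsh_mul_walsh_block]
        split_ifs <;> simp [div_eq_mul_inv]

/-- The Nörlund logarithmic kernel `F_n` without its normalising factor `1 / l_n`. -/
def norlundSum (n : ℕ) (x : ℝ) : ℝ := ∑ i ∈ Finset.Ico 1 n, dirichletKernel (n - i) x / i

lemma intervalIntegrable_norlundSum (n : ℕ) (a b : ℝ) :
    IntervalIntegrable (norlundSum n) volume a b := by
  have hsum := IntervalIntegrable.sum (Finset.Ico 1 n) fun i _ =>
    (intervalIntegrable_dirichletKernel (n - i) a b).div_const (i : ℝ)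
  rwa [Finset.sum_fn] at hsum

lemma integral_mul_walsh_le_integral_abs (g : ℝ → ℝ) {a b : ℝ} (hab : a ≤ b) (q : ℕ) (c : ℝ) :
    ∫ x in a..b, g x * walsh q (c * x) ≤ ∫ x in a..b, |g x| := by
  refine (le_abs_self _).trans ((intervalIntegral.abs_integral_le_integral_abs hab).trans_eq ?_)
  simp only [abs_mul, abs_walsh, mul_one]

lemma integral_norlundSum_mul_walsh_block (m n q : ℕ) :
    ∫ x in (1 / 2 ^ (m + 1) : ℝ)..1 / 2 ^ m, norlundSum n x * walsh q (2 ^ (m + 1) * x) =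
      ∑ i ∈ Finset.Ico 1 n, (if (n - i) / 2 ^ (m + 1) = q then
        tent (2 ^ (m + 1)) ((n - i) % 2 ^ (m + 1)) / 2 ^ (m + 1) else 0) / i := by
  have hint : ∀ i, IntervalIntegrable
      (fun x => dirichletKernel (n - i) x * walsh q (2 ^ (m + 1) * x) / i) volume
      (1 / 2 ^ (m + 1)) (1 / 2 ^ m) := fun i => by
    refine IntervalIntegrable.div_const (intervalIntegrable_of_abs_le (by fun_prop)
      (C := (n - i : ℕ)) (fun x => ?_) _ _) _
    rw [abs_mul, abs_walsh, mul_one]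
    exact abs_dirichletKernel_le _ x
  simp only [norlundSum, Finset.sum_mul, div_mul_eq_mul_div]
  rw [intervalIntegral.integral_finsetSum fun i _ => hint i]
  simp only [intervalIntegral.integral_div, integral_dirichletKernel_mul_walsh_block]

/- On the block the `i`-th summand of `norlundSum n` with `i ≤ 2 ^ m` oscillates like the single
Walsh function of index `n / 2 ^ (m + 2)`, with amplitude at least `2 ^ m / i`. -/
lemma harmonic_le_integral_abs_norlundSum {m n : ℕ} (hlow : 2 * 2 ^ m ≤ n % 2 ^ (m + 2))
    (hhigh : n % 2 ^ (m + 2) ≤ 3 * 2 ^ m) :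
    (harmonic (2 ^ m) : ℝ) / 4 ≤
      ∫ x in (1 / 2 ^ (m + 2) : ℝ)..1 / 2 ^ (m + 1), |norlundSum n x| := by
  set L := 2 ^ (m + 2) with hL
  have hL₀ : 0 < L := by positivity
  have hL₄ : L = 4 * 2 ^ m := by rw [hL, pow_add, mul_comm]; norm_num
  have hmod := Nat.div_add_mod n L
  refine le_trans ?_ (integral_mul_walsh_le_integral_abs (norlundSum n)
    (by gcongr <;> norm_num) (n / L) (2 ^ (m + 2)))
  rw [integral_norlundSum_mul_walsh_block (m + 1), harmonic_eq_sum_Icc, ← hL]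
  push_cast
  rw [Finset.sum_div]
  refine (Finset.sum_le_sum fun i hi => ?_).trans
    (Finset.sum_le_sum_of_subset_of_nonneg (s := Finset.Icc 1 (2 ^ m)) (fun i hi => ?_)
      fun i _ _ => ?_)
  · obtain ⟨hi₁, hi₂⟩ := Finset.mem_Icc.mp hi
    have hsub : n - i = L * (n / L) + (n % L - i) := by omega
    have hlt : n % L - i < L := (Nat.sub_le _ _).trans_lt (Nat.mod_lt _ hL₀)
    have hdiv : (n - i) / L = n / L := by
      rw [hsub, Nat.mul_add_div hL₀, Nat.div_eq_of_lt hlt, add_zero]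
    have htent : ((2 ^ m : ℕ) : ℝ) ≤ tent L ((n - i) % L) := by
      rw [hsub, Nat.mul_add_mod, Nat.mod_eq_of_lt hlt]
      exact le_tent (by omega) (by omega)
    have hamp : 1 / 4 ≤ tent L ((n - i) % L) / 2 ^ (m + 1 + 1) := by
      rw [le_div_iff₀ (by positivity), pow_succ, pow_succ]
      push_cast at htent
      linarith
    rw [if_pos hdiv, inv_eq_one_div, div_right_comm]
    gcongr
  · rw [Finset.mem_Icc] at hi
    rw [Finset.mem_Ico]
    omega
  · have htent := tent_nonneg (Nat.mod_lt (n - i) hL₀).le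
    split_ifs <;> positivity

lemma three_mul_pIdx_add_one (s : ℕ) : 3 * pIdx s + 1 = 4 ^ (s + 1) := by
  have hgeom := Nat.geomSum_eq (m := 4) (by norm_num) (s + 1)
  have hdvd : 4 - 1 ∣ 4 ^ (s + 1) - 1 := by simpa using Nat.sub_dvd_pow_sub_pow 4 1 (s + 1)
  have hpos : 0 < 4 ^ (s + 1) := by positivity
  rw [pIdx]
  omega

lemma pIdx_mod_two_pow {s N : ℕ} (hsN : s ≤ N) : pIdx N % 2 ^ (2 * s + 1) = pIdx s := by
  have hpow : 2 ^ (2 * s + 1) = 2 * 4 ^ s := by rw [pow_succ', pow_mul]; norm_num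
  have hlt : pIdx s < 2 ^ (2 * s + 1) := by
    have hthree := three_mul_pIdx_add_one s
    rw [pow_succ] at hthree
    omega
  induction N, hsN using Nat.le_induction with
  | base => exact Nat.mod_eq_of_lt hlt
  | succ N hN ih =>
    have hdvd : 2 ^ (2 * s + 1) ∣ 4 ^ (N + 1) := by
      obtain ⟨j, rfl⟩ := Nat.exists_eq_add_of_le hN
      exact ⟨2 * 4 ^ j, by rw [hpow]; ring⟩
    rw [pIdx, Finset.sum_range_succ, ← pIdx, Nat.add_mod, ih, Nat.mod_eq_zero_of_dvd hdvd,
      add_zero, Nat.mod_eq_of_lt hlt]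

lemma le_pIdx (N : ℕ) : N + 1 ≤ pIdx N := by
  have hcard := Finset.card_nsmul_le_sum (Finset.range (N + 1)) (fun k => 4 ^ k) 1
    fun k _ => Nat.one_le_pow _ _ (by norm_num)
  simpa [pIdx] using hcard

lemma pIdx_le_two_pow (N : ℕ) : pIdx N ≤ 2 ^ (2 * N + 2) := by
  have hthree := three_mul_pIdx_add_one N
  have hpow : 2 ^ (2 * N + 2) = 4 ^ (N + 1) := by
    rw [← mul_add_one, pow_mul]
    norm_num
  omega

lemma mul_log_two_le_harmonic_two_pow (m : ℕ) : m * Real.log 2 ≤ harmonic (2 ^ m) := by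
  refine le_trans ?_ (log_add_one_le_harmonic (2 ^ m))
  rw [← Real.log_pow]
  refine Real.log_le_log (by positivity) ?_
  push_cast
  linarith

lemma le_integral_abs_norlundSum_pIdx_block {N t : ℕ} (ht : t < N) :
    ((t : ℝ) + 1) / 8 ≤ ∫ x in (1 / 2 ^ (2 * t + 3) : ℝ)..1 / 2 ^ (2 * t + 2),
      |norlundSum (pIdx N) x| := by
  have hmod : pIdx N % 2 ^ (2 * t + 1 + 2) = pIdx (t + 1) := pIdx_mod_two_pow (s := t + 1) ht
  have hthree := three_mul_pIdx_add_one (t + 1)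
  have hpow : 4 ^ (t + 1 + 1) = 8 * 2 ^ (2 * t + 1) := by
    rw [pow_succ, pow_succ, pow_succ, pow_mul]
    norm_num
    ring
  have hblock := harmonic_le_integral_abs_norlundSum (m := 2 * t + 1) (n := pIdx N)
    (by omega) (by omega)
  have hharm := mul_log_two_le_harmonic_two_pow (2 * t + 1)
  have hlog := Real.log_two_gt_d9
  push_cast at hharm
  refine le_trans ?_ hblock
  nlinarith [(t.cast_nonneg : (0 : ℝ) ≤ t)]

lemma le_integral_abs_norlundSum_pIdx_tail {N k : ℕ} (hk : k ≤ N) :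
    (k : ℝ) * (k + 1) / 16 ≤ ∫ x in (1 / 2 ^ (2 * k + 1) : ℝ)..1, |norlundSum (pIdx N) x| := by
  have hint : ∀ a b, IntervalIntegrable (fun x => |norlundSum (pIdx N) x|) volume a b :=
    fun a b => (intervalIntegrable_norlundSum _ a b).abs
  have hnonneg : ∀ {a b : ℝ}, a ≤ b → 0 ≤ ∫ x in a..b, |norlundSum (pIdx N) x| :=
    fun hab => intervalIntegral.integral_nonneg hab fun x _ => abs_nonneg _
  induction k with
  | zero => simpa using hnonneg (by norm_num)
  | succ k ih =>
    have hgap := hnonneg (a := 1 / 2 ^ (2 * k + 2)) (b := 1 / 2 ^ (2 * k + 1))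
      (by gcongr <;> norm_num)
    have hblock := le_integral_abs_norlundSum_pIdx_block (N := N) (t := k) hk
    have hprev := ih (by omega)
    rw [show 2 * (k + 1) + 1 = 2 * k + 3 by ring,
      ← intervalIntegral.integral_add_adjacent_intervals (hint _ (1 / 2 ^ (2 * k + 2))) (hint _ 1),
      ← intervalIntegral.integral_add_adjacent_intervals (hint _ (1 / 2 ^ (2 * k + 1))) (hint _ 1)]
    push_cast
    linarith

lemma le_integral_abs_norlundSum_pIdx (N : ℕ) :
    (N : ℝ) * (N + 1) / 16 ≤ ∫ x in (0 : ℝ)..1, |norlundSum (pIdx N) x| := by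
  refine (le_integral_abs_norlundSum_pIdx_tail le_rfl).trans ?_
  refine intervalIntegral.integral_mono_interval (by positivity) ?_ le_rfl
    (Eventually.of_forall fun x => abs_nonneg _) (intervalIntegrable_norlundSum _ 0 1).abs
  exact div_le_one_of_le₀ (one_le_pow₀ one_le_two) (by positivity)

lemma logSum_eq_harmonic (n : ℕ) : logSum n = harmonic (n - 1) := by
  simp [logSum, harmonic_eq_sum_Icc]

lemma logSum_eq_sum_Ico (n : ℕ) : logSum n = ∑ i ∈ Finset.Ico 1 n, 1 / (i : ℝ) := by
  refine Finset.sum_congr ?_ fun _ _ => rfl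
  ext i
  simp only [Finset.mem_Icc, Finset.mem_Ico]
  omega

lemma logSum_nonneg (n : ℕ) : 0 ≤ logSum n :=
  Finset.sum_nonneg fun _ _ => by positivity

lemma logSum_pos {n : ℕ} (hn : 2 ≤ n) : 0 < logSum n := by
  rw [logSum_eq_harmonic]
  exact_mod_cast harmonic_pos (by omega)

lemma logSum_pIdx_le (N : ℕ) : logSum (pIdx N) ≤ 3 * (N + 1) := by
  rw [logSum_eq_harmonic]
  refine (harmonic_le_one_add_log _).trans ?_
  have hle : ((pIdx N - 1 : ℕ) : ℝ) ≤ 2 ^ (2 * N + 2) := by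
    exact_mod_cast (Nat.sub_le _ _).trans (pIdx_le_two_pow N)
  have hlog : Real.log ((pIdx N - 1 : ℕ) : ℝ) ≤ (2 * N + 2) * Real.log 2 := by
    rcases Nat.eq_zero_or_pos (pIdx N - 1) with hzero | hpos
    · rw [hzero, Nat.cast_zero, Real.log_zero]
      positivity
    · refine (Real.log_le_log (by exact_mod_cast hpos) hle).trans_eq ?_
      rw [Real.log_pow]
      push_cast
      rfl
  nlinarith [Real.log_two_lt_d9, (N.cast_nonneg : (0 : ℝ) ≤ N)]

lemma div_le_integral_abs_FKernel (N : ℕ) :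
    (N : ℝ) / 48 ≤ ∫ x in (0 : ℝ)..1, |FKernel (pIdx N) x| := by
  rcases N.eq_zero_or_pos with rfl | hN
  · simpa using intervalIntegral.integral_nonneg zero_le_one fun x _ => abs_nonneg _
  have hpos : 0 < logSum (pIdx N) := logSum_pos (by linarith [le_pIdx N])
  have hscale : ∫ x in (0 : ℝ)..1, |FKernel (pIdx N) x| =
      (∫ x in (0 : ℝ)..1, |norlundSum (pIdx N) x|) / logSum (pIdx N) := by
    rw [← intervalIntegral.integral_div]
    congr 1 with x
    rw [FKernel, ← norlundSum, one_div_mul_eq_div, abs_div, abs_of_pos hpos]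
  rw [hscale, le_div_iff₀ hpos]
  refine le_trans ?_ (le_integral_abs_norlundSum_pIdx N)
  nlinarith [logSum_pIdx_le N, (N.cast_nonneg : (0 : ℝ) ≤ N)]

lemma one_le_integral_abs_GKernel {n : ℕ} (hn : 2 ≤ n) :
    1 ≤ ∫ x in (0 : ℝ)..1, |GKernel n x| := by
  have hintegral : ∫ x in (0 : ℝ)..1, GKernel n x = 1 := by
    simp only [GKernel]
    rw [intervalIntegral.integral_const_mul, intervalIntegral.integral_finsetSum
      fun i _ => (intervalIntegrable_dirichletKernel i 0 1).div_const _]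
    simp only [intervalIntegral.integral_div]
    rw [Finset.sum_congr rfl fun i hi => by
      rw [integral_dirichletKernel (Finset.mem_Ico.mp hi).1], ← logSum_eq_sum_Ico]
    exact one_div_mul_cancel (logSum_pos hn).ne'
  calc 1 ≤ |∫ x in (0 : ℝ)..1, GKernel n x| := by rw [hintegral, abs_one]
    _ ≤ _ := intervalIntegral.abs_integral_le_integral_abs zero_le_one

/-! ### Rectangular partial sums and mixed logarithmic means -/

lemma integral_abs_le_integral_abs_sub_add {α : Type*} [MeasurableSpace α] {μ : Measure α}
    {f g : α → ℝ} (hf : Integrable f μ) (hg : Integrable g μ) :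
    ∫ x, |f x| ∂μ ≤ ∫ x, |f x - g x| ∂μ + ∫ x, |g x| ∂μ := by
  have hfg : Integrable (fun x => |f x - g x|) μ := (hf.sub hg).abs
  rw [← integral_add hfg hg.abs]
  refine integral_mono hf.abs (hfg.add hg.abs) fun x => ?_
  simpa using abs_add_le (f x - g x) (g x)

lemma cubeMeasure_eq_pi (d : ℕ) : cubeMeasure d = Measure.pi fun _ => unitMeasure := by
  rw [cubeMeasure, unitCube, volume_pi, Measure.restrict_pi_pi]
  rfl

instance : IsProbabilityMeasure unitMeasure := ⟨by simp [unitMeasure]⟩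

instance (d : ℕ) : IsProbabilityMeasure (cubeMeasure d) := by
  rw [cubeMeasure_eq_pi]
  infer_instance

lemma integral_unitMeasure (g : ℝ → ℝ) : ∫ x, g x ∂unitMeasure = ∫ x in (0 : ℝ)..1, g x := by
  rw [unitMeasure, intervalIntegral.integral_of_le zero_le_one, integral_Ico_eq_integral_Ioc]

lemma integral_cubeMeasure_prod {d : ℕ} (φ : Fin d → ℝ → ℝ) :
    ∫ x, ∏ i, φ i (x i) ∂cubeMeasure d = ∏ i, ∫ x in (0 : ℝ)..1, φ i x := by
  simp only [cubeMeasure_eq_pi, integral_fintype_prod_eq_prod, integral_unitMeasure]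

/-- The product Walsh function `∏ i, w_{j_i}(x_i)`. -/
def walshProd {d : ℕ} (j : Fin d → ℕ) (x : Fin d → ℝ) : ℝ := ∏ i, walsh (j i) (x i)

section WalshFourier

variable {d : ℕ} {f g : (Fin d → ℝ) → ℝ}

lemma abs_walshProd (j : Fin d → ℕ) (x : Fin d → ℝ) : |walshProd j x| = 1 := by
  rw [walshProd, Finset.abs_prod]
  exact Finset.prod_eq_one fun i _ => abs_walsh (j i) (x i)

@[fun_prop]
lemma measurable_walshProd (j : Fin d → ℕ) : Measurable (walshProd j) := by
  unfold walshProd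
  fun_prop

lemma memLp_walshProd (j : Fin d → ℕ) (p : ENNReal) : MemLp (walshProd j) p (cubeMeasure d) :=
  MemLp.of_bound (measurable_walshProd j).aestronglyMeasurable 1
    (Eventually.of_forall fun x => (abs_walshProd j x).le)

lemma integrable_mul_walshProd (hf : Integrable f (cubeMeasure d)) (j : Fin d → ℕ) :
    Integrable (fun x => f x * walshProd j x) (cubeMeasure d) :=
  hf.mul_bdd (c := 1) (measurable_walshProd j).aestronglyMeasurable
    (Eventually.of_forall fun x => (abs_walshProd j x).le)

lemma walshCoef_walshProd (j k : Fin d → ℕ) :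
    walshCoef (walshProd j) k = if j = k then 1 else 0 := by
  have hprod : ∀ x, walshProd j x * walshProd k x =
      ∏ i, walsh (j i) (x i) * walsh (k i) (x i) := fun x => Finset.prod_mul_distrib.symm
  have horth : ∀ i, ∫ x in (0 : ℝ)..1, walsh (j i) x * walsh (k i) x =
      if j i = k i then 1 else 0 := fun i => by
    simpa only [zero_add] using integral_walsh_mul_walsh (j i) (k i) 0
  change ∫ x, walshProd j x * walshProd k x ∂cubeMeasure d = _
  simp only [hprod]
  rw [integral_cubeMeasure_prod fun i y => walsh (j i) y * walsh (k i) y]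
  simp only [horth, Finset.prod_boole, Finset.mem_univ, forall_true_left, funext_iff]

lemma walshCoef_add (hf : Integrable f (cubeMeasure d)) (hg : Integrable g (cubeMeasure d))
    (j : Fin d → ℕ) : walshCoef (f + g) j = walshCoef f j + walshCoef g j := by
  simp only [walshCoef, Pi.add_apply, add_mul]
  exact integral_add (integrable_mul_walshProd hf j) (integrable_mul_walshProd hg j)

lemma rectPartialSum_add (hf : Integrable f (cubeMeasure d)) (hg : Integrable g (cubeMeasure d))
    (N : Fin d → ℕ) : rectPartialSum (f + g) N = rectPartialSum f N + rectPartialSum g N := by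
  ext x
  simp only [rectPartialSum, walshCoef_add hf hg, add_mul, Finset.sum_add_distrib, Pi.add_apply]

lemma mixedLogMean_add (B : Finset (Fin d)) (hf : Integrable f (cubeMeasure d))
    (hg : Integrable g (cubeMeasure d)) (n : Fin d → ℕ) :
    mixedLogMean B (f + g) n = mixedLogMean B f n + mixedLogMean B g n := by
  ext x
  simp only [mixedLogMean, rectPartialSum_add hf hg, add_div, Finset.sum_add_distrib, mul_add,
    Pi.add_apply]

variable (f)

lemma memLp_rectPartialSum (N : Fin d → ℕ) (p : ENNReal) :
    MemLp (rectPartialSum f N) p (cubeMeasure d) :=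
  memLp_finsetSum _ fun j _ => (memLp_walshProd j p).const_mul (walshCoef f j)

lemma integrable_rectPartialSum (N : Fin d → ℕ) :
    Integrable (rectPartialSum f N) (cubeMeasure d) :=
  memLp_one_iff_integrable.mp (memLp_rectPartialSum f N 1)

lemma integrable_mixedLogMean (B : Finset (Fin d)) (n : Fin d → ℕ) :
    Integrable (mixedLogMean B f n) (cubeMeasure d) :=
  (integrable_finsetSum _ fun _ _ => (integrable_rectPartialSum f _).div_const _).const_mul _

lemma integral_abs_mixedLogMean_le_add (B : Finset (Fin d)) {f : (Fin d → ℝ) → ℝ}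
    (hf : Integrable f (cubeMeasure d)) (hg : Integrable g (cubeMeasure d)) (n : Fin d → ℕ) :
    ∫ x, |mixedLogMean B f n x| ∂cubeMeasure d ≤
      ∫ x, |mixedLogMean B (f + g) n x| ∂cubeMeasure d +
        ∫ x, |mixedLogMean B g n x| ∂cubeMeasure d := by
  simpa [mixedLogMean_add B hf hg n] using integral_abs_le_integral_abs_sub_add
    (integrable_mixedLogMean f B n) (integrable_mixedLogMean g B n).neg

lemma integral_mul_rectPartialSum (hg : Integrable g (cubeMeasure d)) (N : Fin d → ℕ) :
    ∫ x, g x * rectPartialSum f N x ∂cubeMeasure d =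
      ∑ j ∈ Fintype.piFinset fun i => Finset.range (N i), walshCoef f j * walshCoef g j := by
  simp only [rectPartialSum, Finset.mul_sum, mul_left_comm (g _)]
  refine (integral_finsetSum _ fun j _ => (integrable_mul_walshProd hg j).const_mul _).trans ?_
  simp only [integral_const_mul]
  rfl

lemma walshCoef_rectPartialSum {N k : Fin d → ℕ}
    (hk : k ∈ Fintype.piFinset fun i => Finset.range (N i)) :
    walshCoef (rectPartialSum f N) k = walshCoef f k := by
  have hint := integral_mul_rectPartialSum f (memLp_one_iff_integrable.mp (memLp_walshProd k 1)) N
  simp only [walshCoef_walshProd, mul_ite, mul_one, mul_zero, Finset.sum_ite_eq, if_pos hk,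
    mul_comm (walshProd k _)] at hint
  exact hint

variable {f}

lemma integral_rectPartialSum_sq (hf : Integrable f (cubeMeasure d)) (N : Fin d → ℕ) :
    ∫ x, rectPartialSum f N x ^ 2 ∂cubeMeasure d =
      ∫ x, f x * rectPartialSum f N x ∂cubeMeasure d := by
  simp only [pow_two]
  rw [integral_mul_rectPartialSum f (integrable_rectPartialSum f N),
    integral_mul_rectPartialSum f hf]
  exact Finset.sum_congr rfl fun k hk => by rw [walshCoef_rectPartialSum f hk]

lemma integral_rectPartialSum_sq_le (hf : MemLp f 2 (cubeMeasure d)) (N : Fin d → ℕ) :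
    ∫ x, rectPartialSum f N x ^ 2 ∂cubeMeasure d ≤ ∫ x, f x ^ 2 ∂cubeMeasure d := by
  have hS := memLp_rectPartialSum f N 2
  have hfS : Integrable (fun x => 2 * (f x * rectPartialSum f N x)) (cubeMeasure d) :=
    (hf.integrable_mul hS).const_mul 2
  have hexpand : ∫ x, (f x - rectPartialSum f N x) ^ 2 ∂cubeMeasure d =
      ∫ x, f x ^ 2 ∂cubeMeasure d - 2 * ∫ x, f x * rectPartialSum f N x ∂cubeMeasure d +
        ∫ x, rectPartialSum f N x ^ 2 ∂cubeMeasure d := by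
    simp only [sub_sq, mul_assoc]
    rw [integral_add ?_ hS.integrable_sq, integral_sub hf.integrable_sq hfS, integral_const_mul]
    exact hf.integrable_sq.sub hfS
  have hnonneg : 0 ≤ ∫ x, (f x - rectPartialSum f N x) ^ 2 ∂cubeMeasure d :=
    integral_nonneg fun x => sq_nonneg _
  rw [hexpand, ← integral_rectPartialSum_sq (hf.integrable one_le_two)] at hnonneg
  linarith

lemma integral_abs_rectPartialSum_le (hf : AEStronglyMeasurable f (cubeMeasure d)) {t : ℝ}
    (ht : ∀ᵐ x ∂cubeMeasure d, |f x| ≤ t) (N : Fin d → ℕ) :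
    ∫ x, |rectPartialSum f N x| ∂cubeMeasure d ≤ t := by
  have ht₀ : 0 ≤ t := ht.exists.elim fun x hx => (abs_nonneg _).trans hx
  have hf₂ : MemLp f 2 (cubeMeasure d) := MemLp.of_bound hf t ht
  have hjensen : (∫ x, |rectPartialSum f N x| ∂cubeMeasure d) ^ 2 ≤
      ∫ x, rectPartialSum f N x ^ 2 ∂cubeMeasure d := by
    have hvar := ProbabilityTheory.variance_eq_sub (memLp_rectPartialSum f N 2).abs
    simp only [Pi.pow_apply, Pi.abs_apply, sq_abs] at hvar
    linarith [ProbabilityTheory.variance_nonneg |rectPartialSum f N| (cubeMeasure d)]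
  have hsq : ∫ x, f x ^ 2 ∂cubeMeasure d ≤ t ^ 2 := by
    have hmono := integral_mono_ae hf₂.integrable_sq (integrable_const (t ^ 2))
      (ht.mono fun x hx => sq_le_sq.mpr (hx.trans (le_abs_self t)))
    simpa using hmono
  exact le_of_sq_le_sq (hjensen.trans ((integral_rectPartialSum_sq_le hf₂ N).trans hsq)) ht₀

lemma sum_one_div_prod_eq_prod_logSum (n : Fin d → ℕ) :
    ∑ i ∈ Fintype.piFinset fun j => Finset.Ico 1 (n j), 1 / ∏ j, (i j : ℝ) =
      ∏ j, logSum (n j) := by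
  simp only [logSum_eq_sum_Ico, Finset.prod_univ_sum, Finset.prod_div_distrib,
    Finset.prod_const_one]

lemma integral_abs_mixedLogMean_le {t : ℝ} (ht₀ : 0 ≤ t)
    (ht : ∀ N, ∫ x, |rectPartialSum f N x| ∂cubeMeasure d ≤ t)
    (B : Finset (Fin d)) (n : Fin d → ℕ) : ∫ x, |mixedLogMean B f n x| ∂cubeMeasure d ≤ t := by
  set P := Fintype.piFinset fun j => Finset.Ico 1 (n j)
  set K : (Fin d → ℕ) → Fin d → ℕ := fun i j => if j ∈ B then n j - i j else i j
  have hweight : ∀ i : Fin d → ℕ, 0 ≤ ∏ j, (i j : ℝ) := fun i => by positivity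
  have hl : 0 ≤ ∏ j, logSum (n j) := Finset.prod_nonneg fun j _ => logSum_nonneg (n j)
  have hterm : ∀ i ∈ P, Integrable (fun x => |rectPartialSum f (K i) x| / ∏ j, (i j : ℝ))
      (cubeMeasure d) := fun i _ => (integrable_rectPartialSum f _).abs.div_const _
  calc ∫ x, |mixedLogMean B f n x| ∂cubeMeasure d
      ≤ ∫ x, (∏ j, logSum (n j))⁻¹ *
          ∑ i ∈ P, |rectPartialSum f (K i) x| / ∏ j, (i j : ℝ) ∂cubeMeasure d := by
        refine integral_mono (integrable_mixedLogMean f B n).abs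
          ((integrable_finsetSum _ hterm).const_mul _) fun x => ?_
        simp only [mixedLogMean, abs_mul, abs_of_nonneg (inv_nonneg.mpr hl)]
        gcongr
        refine (Finset.abs_sum_le_sum_abs _ _).trans_eq (Finset.sum_congr rfl fun i _ => ?_)
        rw [abs_div, abs_of_nonneg (hweight i)]
    _ ≤ (∏ j, logSum (n j))⁻¹ * ∑ i ∈ P, t / ∏ j, (i j : ℝ) := by
        rw [integral_const_mul, integral_finsetSum _ hterm]
        gcongr with i _
        rw [integral_div]
        exact div_le_div_of_nonneg_right (ht _) (hweight i)
    _ = (∏ j, logSum (n j))⁻¹ * (∏ j, logSum (n j)) * t := by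
        simp only [← sum_one_div_prod_eq_prod_logSum, div_eq_mul_one_div t, ← Finset.mul_sum]
        ring
    _ ≤ t := mul_le_of_le_one_left ht₀ inv_mul_le_one

end WalshFourier

/-! ### Means of functions with a peak on a dyadic cube -/

/-- The dyadic cube of side `2 ^ (-m)` with corner at the origin. It is taken open, so that the
cubes have no common point. -/
def dyadicCube (d m : ℕ) : Set (Fin d → ℝ) := Set.univ.pi fun _ => Set.Ioo 0 (1 / 2 ^ m)

lemma measurableSet_dyadicCube (d m : ℕ) : MeasurableSet (dyadicCube d m) :=
  MeasurableSet.univ_pi fun _ => measurableSet_Ioo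

lemma dyadicCube_antitone (d : ℕ) : Antitone (dyadicCube d) := fun m n hmn =>
  Set.pi_mono fun _ _ => Set.Ioo_subset_Ioo_right (by gcongr; norm_num)

lemma exists_notMem_dyadicCube {d : ℕ} (hd : 1 ≤ d) (x : Fin d → ℝ) : ∃ m, x ∉ dyadicCube d m := by
  by_contra! hx
  have hpos : 0 < x ⟨0, hd⟩ := (hx 0 ⟨0, hd⟩ trivial).1
  obtain ⟨m, hm⟩ := exists_pow_lt_of_lt_one hpos (one_half_lt_one (α := ℝ))
  rw [one_div_pow] at hm
  exact lt_asymm hm (hx m ⟨0, hd⟩ trivial).2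

lemma cubeMeasure_real_dyadicCube (d m : ℕ) :
    (cubeMeasure d).real (dyadicCube d m) = 1 / (2 ^ m) ^ d := by
  have hsub : Set.Ioo (0 : ℝ) (1 / 2 ^ m) ⊆ Set.Ico 0 1 := fun y hy =>
    ⟨hy.1.le, hy.2.trans_le (div_le_one_of_le₀ (one_le_pow₀ one_le_two) (by positivity))⟩
  have hside : unitMeasure (Set.Ioo 0 (1 / 2 ^ m)) = ENNReal.ofReal (1 / 2 ^ m) := by
    rw [unitMeasure, Measure.restrict_eq_self _ hsub, Real.volume_Ioo, sub_zero]
  rw [measureReal_def, cubeMeasure_eq_pi, dyadicCube, Measure.pi_pi]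
  simp only [hside, Finset.prod_const, Finset.card_fin, ENNReal.toReal_pow]
  rw [ENNReal.toReal_ofReal (by positivity), one_div_pow]

lemma cubeMeasure_real_dyadicCube_two_mul_add_two (d N : ℕ) :
    (cubeMeasure d).real (dyadicCube d (2 * N + 2)) = 1 / (4 ^ d) ^ (N + 1) := by
  rw [cubeMeasure_real_dyadicCube, ← mul_add_one, pow_mul, pow_right_comm]
  norm_num

section Concentrated

variable {d m : ℕ} {h : (Fin d → ℝ) → ℝ}

lemma walshProd_eq_one_of_mem_dyadicCube {j : Fin d → ℕ} (hj : ∀ i, j i < 2 ^ m) {x : Fin d → ℝ}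
    (hx : x ∈ dyadicCube d m) : walshProd j x = 1 := by
  refine Finset.prod_eq_one fun i _ => ?_
  obtain ⟨hpos, hlt⟩ := hx i trivial
  exact walsh_eq_one_of_mul_lt_one (hj i) hpos.le ((lt_div_iff₀' (by positivity)).mp hlt)

lemma walshCoef_eq_integral (hh : Function.support h ⊆ dyadicCube d m) {j : Fin d → ℕ}
    (hj : ∀ i, j i < 2 ^ m) : walshCoef h j = ∫ x, h x ∂cubeMeasure d := by
  refine integral_congr_ae (Eventually.of_forall fun x => ?_)
  by_cases hx : h x = 0
  · simp [hx]
  · exact mul_eq_left₀ hx |>.mpr (walshProd_eq_one_of_mem_dyadicCube hj (hh hx))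

lemma rectPartialSum_eq_integral_mul_prod (hh : Function.support h ⊆ dyadicCube d m)
    {N : Fin d → ℕ} (hN : ∀ i, N i ≤ 2 ^ m) (x : Fin d → ℝ) :
    rectPartialSum h N x = (∫ x, h x ∂cubeMeasure d) * ∏ i, dirichletKernel (N i) (x i) := by
  simp only [dirichletKernel, Finset.prod_univ_sum, Finset.mul_sum]
  refine Finset.sum_congr rfl fun j hj => ?_
  rw [walshCoef_eq_integral hh fun i =>
    (Finset.mem_range.mp (Fintype.mem_piFinset.mp hj i)).trans_le (hN i)]

lemma mixedLogMean_eq_integral_mul_prod (hh : Function.support h ⊆ dyadicCube d m)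
    (B : Finset (Fin d)) {n : Fin d → ℕ} (hn : ∀ i, n i ≤ 2 ^ m) (x : Fin d → ℝ) :
    mixedLogMean B h n x = (∫ x, h x ∂cubeMeasure d) *
      ∏ j, if j ∈ B then FKernel (n j) (x j) else GKernel (n j) (x j) := by
  have hkernel : ∀ j, (if j ∈ B then FKernel (n j) (x j) else GKernel (n j) (x j)) =
      (logSum (n j))⁻¹ * ∑ i ∈ Finset.Ico 1 (n j),
        dirichletKernel (if j ∈ B then n j - i else i) (x j) / i := fun j => by
    split_ifs <;> simp only [FKernel, GKernel, one_div]
  simp only [hkernel, Finset.prod_mul_distrib, Finset.prod_inv_distrib, Finset.prod_univ_sum,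
    mixedLogMean, mul_left_comm (∫ x, h x ∂cubeMeasure d)]
  congr 1
  rw [Finset.mul_sum]
  refine Finset.sum_congr rfl fun i hi => ?_
  have hindex : ∀ j, (if j ∈ B then n j - i j else i j) ≤ 2 ^ m := fun j => by
    have hij := Finset.mem_Ico.mp (Fintype.mem_piFinset.mp hi j)
    split_ifs <;> linarith [hn j, Nat.sub_le (n j) (i j)]
  rw [rectPartialSum_eq_integral_mul_prod hh hindex, Finset.prod_div_distrib, mul_div_assoc]

lemma integral_abs_mixedLogMean_eq (hh : Function.support h ⊆ dyadicCube d m)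
    (B : Finset (Fin d)) {n : Fin d → ℕ} (hn : ∀ i, n i ≤ 2 ^ m) :
    ∫ x, |mixedLogMean B h n x| ∂cubeMeasure d = |∫ x, h x ∂cubeMeasure d| *
      ∏ j, if j ∈ B then ∫ x in (0 : ℝ)..1, |FKernel (n j) x|
        else ∫ x in (0 : ℝ)..1, |GKernel (n j) x| := by
  simp only [mixedLogMean_eq_integral_mul_prod hh B hn, abs_mul, Finset.abs_prod]
  rw [integral_const_mul, integral_cubeMeasure_prod fun j y =>
    |if j ∈ B then FKernel (n j) y else GKernel (n j) y|]
  congr 1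
  refine Finset.prod_congr rfl fun j _ => ?_
  split_ifs <;> rfl

lemma mul_pow_card_le_integral_abs_mixedLogMean {N : ℕ} (hN : 1 ≤ N)
    (hh : Function.support h ⊆ dyadicCube d (2 * N + 2)) (B : Finset (Fin d)) :
    |∫ x, h x ∂cubeMeasure d| * (N / 48 : ℝ) ^ B.card ≤
      ∫ x, |mixedLogMean B h (fun _ => pIdx N) x| ∂cubeMeasure d := by
  rw [integral_abs_mixedLogMean_eq hh B fun _ => pIdx_le_two_pow N]
  have hpow : (N / 48 : ℝ) ^ B.card = ∏ j : Fin d, if j ∈ B then (N / 48 : ℝ) else 1 := by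
    rw [Finset.prod_ite_mem, Finset.univ_inter, Finset.prod_const]
  rw [hpow]
  gcongr with j
  split_ifs
  · exact div_le_integral_abs_FKernel N
  · exact one_le_integral_abs_GKernel (by linarith [le_pIdx N])

end Concentrated

lemma le_integral_abs_mixedLogMean {d N : ℕ} (hN : 1 ≤ N) {f : (Fin d → ℝ) → ℝ}
    (hf : Integrable f (cubeMeasure d)) {t u : ℝ} (ht : 0 ≤ t)
    (hft : ∀ x ∉ dyadicCube d (2 * N + 2), |f x| ≤ t)
    (hfu : ∀ x ∈ dyadicCube d (2 * N + 2), u ≤ f x) (B : Finset (Fin d)) :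
    u / (4 ^ d) ^ (N + 1) * (N / 48 : ℝ) ^ B.card - t ≤
      ∫ x, |mixedLogMean B f (fun _ => pIdx N) x| ∂cubeMeasure d := by
  set C := dyadicCube d (2 * N + 2)
  have hC : MeasurableSet C := measurableSet_dyadicCube _ _
  have hpeak := mul_pow_card_le_integral_abs_mixedLogMean hN (h := C.indicator f)
    Set.support_indicator_subset B
  have hmass : u / (4 ^ d) ^ (N + 1) ≤ |∫ x, C.indicator f x ∂cubeMeasure d| := by
    have hle := setIntegral_ge_of_const_le_real hC (measure_ne_top _ _) hfu hf.integrableOn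
    rw [cubeMeasure_real_dyadicCube_two_mul_add_two, mul_one_div] at hle
    rw [integral_indicator hC]
    exact hle.trans (le_abs_self _)
  have hrest : ∫ x, |mixedLogMean B (Cᶜ.indicator f) (fun _ => pIdx N) x| ∂cubeMeasure d ≤ t := by
    refine integral_abs_mixedLogMean_le ht (integral_abs_rectPartialSum_le
      (hf.indicator hC.compl).aestronglyMeasurable (Eventually.of_forall fun x => ?_)) B _
    by_cases hx : x ∈ C
    · simpa [hx] using ht
    · simpa [hx] using hft x hx
  have htriangle := integral_abs_mixedLogMean_le_add B (hf.indicator hC)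
    (hf.indicator hC.compl) fun _ => pIdx N
  rw [Set.indicator_self_add_compl] at htriangle
  have hmul := mul_le_mul_of_nonneg_right hmass (by positivity : 0 ≤ (N / 48 : ℝ) ^ B.card)
  linarith

/-! ### Orlicz spaces and growth of Young functions -/

lemma log_one_add_mul_le {k v : ℝ} (hk : 0 ≤ k) (hv : 1 ≤ v) :
    Real.log (1 + k * v) ≤ (Real.log (1 + k) / Real.log 2 + 1) * Real.log (1 + v) := by
  have hlogk : 0 ≤ Real.log (1 + k) := Real.log_nonneg (by linarith)
  have hlogv : Real.log 2 ≤ Real.log (1 + v) := Real.log_le_log (by norm_num) (by linarith)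
  calc Real.log (1 + k * v) ≤ Real.log ((1 + k) * (1 + v)) :=
        Real.log_le_log (by positivity) (by nlinarith)
    _ = Real.log (1 + k) / Real.log 2 * Real.log 2 + Real.log (1 + v) := by
        rw [Real.log_mul (by positivity) (by positivity), div_mul_cancel₀ _ (by positivity)]
    _ ≤ Real.log (1 + k) / Real.log 2 * Real.log (1 + v) + Real.log (1 + v) := by gcongr
    _ = _ := by ring

lemma mul_log_pow_le_of_le {V k v : ℝ} (hV : 0 ≤ V) (hk : 0 ≤ k) (hv : 0 ≤ v) (b : ℕ) {c : ℝ}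
    (hc : 0 < c) {q : ℝ} (hq : 0 ≤ q) (hVq : 1 + V ≤ v → c * (v * Real.log (1 + v) ^ b) ≤ q) :
    k * v * Real.log (1 + k * v) ^ b ≤ k * (1 + V) * Real.log (1 + k * (1 + V)) ^ b +
      k * (Real.log (1 + k) / Real.log 2 + 1) ^ b / c * q := by
  have hlogk : 0 ≤ Real.log (1 + k) := Real.log_nonneg (by linarith)
  have hlogkV : 0 ≤ Real.log (1 + k * (1 + V)) := Real.log_nonneg (by linarith [mul_nonneg hk hV])
  have hlogkv : 0 ≤ Real.log (1 + k * v) := Real.log_nonneg (by linarith [mul_nonneg hk hv])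
  set E := Real.log (1 + k) / Real.log 2 + 1
  rcases le_total v (1 + V) with hsmall | hlarge
  · refine le_add_of_le_of_nonneg ?_ (by positivity)
    gcongr
  · refine le_add_of_nonneg_of_le (by positivity) ?_
    calc k * v * Real.log (1 + k * v) ^ b ≤ k * v * (E * Real.log (1 + v)) ^ b := by
          gcongr
          exact log_one_add_mul_le hk (by linarith)
      _ = k * E ^ b / c * (c * (v * Real.log (1 + v) ^ b)) := by
          rw [mul_pow]
          field_simp
      _ ≤ k * E ^ b / c * q := by
          gcongr
          exact hVq hlarge

namespace MemOrlicz

variable {d : ℕ} {Q : YoungFunction} {f : (Fin d → ℝ) → ℝ}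

lemma integrable_mul_log_pow (hf : MemOrlicz Q f) {b : ℕ} {c : ℝ} (hc : 0 < c)
    (hQ : ∀ᶠ u in atTop, c * (u * Real.log (1 + u) ^ b) ≤ Q.toFun u) :
    Integrable (fun x => |f x| * Real.log (1 + |f x|) ^ b) (cubeMeasure d) := by
  obtain ⟨hfm, k, hk, hint, -⟩ := hf
  obtain ⟨V, hV0, hV⟩ := (atTop_basis' (0 : ℝ)).eventually_iff.mp hQ
  refine Integrable.mono' ((integrable_const (k * (1 + V) * Real.log (1 + k * (1 + V)) ^ b)).add
    (hint.const_mul (k * (Real.log (1 + k) / Real.log 2 + 1) ^ b / c)))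
    (by fun_prop : Measurable _).aestronglyMeasurable (Eventually.of_forall fun x => ?_)
  have hlog : 0 ≤ Real.log (1 + |f x|) := Real.log_nonneg (by linarith [abs_nonneg (f x)])
  rw [Real.norm_of_nonneg (by positivity)]
  have hle := mul_log_pow_le_of_le (v := |f x| / k) hV0 hk.le (by positivity) b hc (Q.nonneg _)
    fun hx => hV (by simp only [Set.mem_Ici]; linarith)
  rwa [mul_div_cancel₀ _ hk.ne'] at hle

lemma integrable (hf : MemOrlicz Q f) : Integrable f (cubeMeasure d) := by
  have hQ : ∀ᶠ u in atTop, 1 * (u * Real.log (1 + u) ^ 0) ≤ Q.toFun u := by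
    filter_upwards [Q.tendsto_atTop.eventually_ge_atTop 1, eventually_gt_atTop 0] with u hu hpos
    simpa using (le_div_iff₀ hpos).mp hu
  have habs : Integrable (fun x => |f x|) (cubeMeasure d) := by
    simpa using hf.integrable_mul_log_pow one_pos hQ
  exact (integrable_norm_iff hf.1.aestronglyMeasurable).mp habs

lemma frequently_lt_mul_log_pow (hf : MemOrlicz Q f) {b : ℕ}
    (hni : ¬ Integrable (fun x => |f x| * Real.log (1 + |f x|) ^ b) (cubeMeasure d)) {c : ℝ}
    (hc : 0 < c) : ∃ᶠ u in atTop, Q.toFun u < c * (u * Real.log (1 + u) ^ b) := by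
  contrapose! hni
  exact hf.integrable_mul_log_pow hc hni

lemma of_lintegral_le_one (hf : Measurable f) (hf0 : ∀ x, 0 ≤ f x)
    (hle : ∫⁻ x, ENNReal.ofReal (Q.toFun (f x)) ∂cubeMeasure d ≤ 1) : MemOrlicz Q f := by
  have hQf : Measurable fun x => Q.toFun (f x) := Q.continuous.measurable.comp hf
  have hQf0 : 0 ≤ᵐ[cubeMeasure d] fun x => Q.toFun (f x) := Eventually.of_forall fun _ => Q.nonneg _
  refine ⟨hf, 1, one_pos, ?_, ?_⟩ <;> simp only [abs_of_nonneg (hf0 _), div_one]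
  · exact ⟨hQf.aestronglyMeasurable,
      (hasFiniteIntegral_iff_ofReal hQf0).mpr (hle.trans_lt ENNReal.one_lt_top)⟩
  · rw [integral_eq_lintegral_of_nonneg_ae hQf0 hQf.aestronglyMeasurable]
    exact ENNReal.toReal_le_of_le_ofReal zero_le_one (by simpa using hle)

end MemOrlicz

namespace YoungFunction

variable {Q : YoungFunction} {b : ℕ} {A κ : ℝ}

/- The height `u` is chosen first, where `Q` is exceptionally small; `N` is then the exponent
for which `A ^ (N + 1)` is comparable to `Q u / δ`, so that `log u` is at most comparable to `N`. -/
lemma exists_le_mul_pow_and_mul_pow_le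
    (hQ : ∀ c > 0, ∃ᶠ u in atTop, Q.toFun u < c * (u * Real.log (1 + u) ^ b))
    (hA : 1 < A) (hκ : 0 < κ) {δ : ℝ} (hδ : 0 < δ) (M : ℝ) :
    ∃ (s : ℝ) (N : ℕ), M ≤ s ∧ M ≤ N ∧ Q.toFun s ≤ δ * A ^ (N + 1) ∧
      M * A ^ (N + 1) ≤ s * (κ * N) ^ b := by
  wlog hM : 1 ≤ M generalizing M
  · obtain ⟨s, N, hs, hN, hQs, hsN⟩ := this 1 le_rfl
    have hM1 : M ≤ 1 := (not_le.mp hM).le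
    exact ⟨s, N, hM1.trans hs, hM1.trans hN, hQs, le_trans (by gcongr) hsN⟩
  have hlogA : 0 < Real.log A := Real.log_pos hA
  set c := δ * κ ^ b / (A * M * (2 * Real.log A) ^ b)
  have hlogTop : Tendsto (fun u => Real.log (1 + u)) atTop atTop :=
    Real.tendsto_log_atTop.comp (tendsto_atTop_add_const_left _ 1 tendsto_id)
  obtain ⟨u, hQu, hδu, hMu, hlogu⟩ := ((hQ c (by positivity)).and_eventually
    ((Q.tendsto_atTop.eventually_ge_atTop (2 * δ)).and ((eventually_ge_atTop M).and
      (hlogTop.eventually_ge_atTop ((M + 1) * Real.log A))))).exists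
  have hu : 0 < u := by linarith
  rw [le_div_iff₀ hu] at hδu
  have huQ : 1 + u ≤ Q.toFun u / δ := by
    rw [le_div_iff₀ hδ]
    nlinarith
  obtain ⟨N, hNle, hltN⟩ := exists_nat_pow_near (by linarith : 1 ≤ Q.toFun u / δ) hA
  have hlog_le : Real.log (1 + u) ≤ (N + 1) * Real.log A := by
    rw [← Nat.cast_add_one, ← Real.log_pow]
    exact Real.log_le_log (by linarith) (huQ.trans hltN.le)
  have hMN : M ≤ N := by
    linarith [le_of_mul_le_mul_right (hlogu.trans hlog_le) hlogA]
  refine ⟨u, N, hMu, hMN, (div_le_iff₀' hδ).mp hltN.le, ?_⟩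
  have hlog_le' : Real.log (1 + u) ≤ 2 * Real.log A * N := by nlinarith
  have hlog0 : 0 ≤ Real.log (1 + u) := Real.log_nonneg (by linarith)
  calc M * A ^ (N + 1) = M * A * A ^ N := by ring
    _ ≤ M * A * (c * (u * (2 * Real.log A * N) ^ b) / δ) := by
        gcongr
        refine hNle.trans (div_le_div_of_nonneg_right (hQu.le.trans ?_) hδ.le)
        gcongr
    _ = u * (κ * N) ^ b := by
        simp only [c, mul_pow]
        field_simp

lemma exists_heights_and_scales
    (hQ : ∀ c > 0, ∃ᶠ u in atTop, Q.toFun u < c * (u * Real.log (1 + u) ^ b))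
    (hA : 1 < A) (hκ : 0 < κ) :
    ∃ (s : ℕ → ℝ) (N : ℕ → ℕ), s 0 = 0 ∧ Monotone s ∧ StrictMono N ∧
      (∀ k, Q.toFun (s (k + 1)) ≤ (1 / 2) ^ (k + 1) * A ^ (N (k + 1) + 1)) ∧
      ∀ k, (k + s k) * A ^ (N (k + 1) + 1) ≤ s (k + 1) * (κ * N (k + 1)) ^ b := by
  choose S T hS hT hQS hST using fun k : ℕ =>
    exists_le_mul_pow_and_mul_pow_le hQ hA hκ (δ := (1 / 2) ^ (k + 1)) (by positivity)
  let bound (k : ℕ) (p : ℝ × ℕ) : ℝ := k + p.1 + p.2 + 1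
  let p : ℕ → ℝ × ℕ := Nat.rec (0, 0) fun k q => (S k (bound k q), T k (bound k q))
  have hp0 : ∀ k, 0 ≤ (p k).1 := by
    intro k
    induction k with
    | zero => exact le_rfl
    | succ k ih => exact le_trans (by positivity) (hS k (bound k (p k)))
  refine ⟨fun k => (p k).1, fun k => (p k).2, rfl, monotone_nat_of_le_succ fun k => ?_,
    strictMono_nat_of_lt_succ fun k => ?_, fun k => hQS k _, fun k => ?_⟩
  · refine le_trans ?_ (hS k (bound k (p k)))
    have : (0 : ℝ) ≤ k + (p k).2 + 1 := by positivity
    linarith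
  · have hlt : ((p k).2 : ℝ) < T k (bound k (p k)) := by
      refine lt_of_lt_of_le ?_ (hT k (bound k (p k)))
      have : (0 : ℝ) ≤ k + (p k).1 := add_nonneg k.cast_nonneg (hp0 k)
      linarith
    exact_mod_cast hlt
  · refine le_trans ?_ (hST k (bound k (p k)))
    gcongr
    have : (0 : ℝ) ≤ (p k).2 + 1 := by positivity
    linarith

end YoungFunction

/-! ### Construction of the divergent function -/

/-- The exit index of a point from a decreasing sequence of sets: the least `k` with `x ∉ C k`.
Prescribing the values of a function on the layers `C (k - 1) \ C k` amounts to composing a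
sequence with `exitIndex C`. Points that never exit get the junk value `0`. -/
def exitIndex {α : Type*} (C : ℕ → Set α) (x : α) : ℕ := sInf {k | x ∉ C k}

section ExitIndex

variable {α : Type*} {C : ℕ → Set α}

lemma lt_exitIndex_iff (hC : Antitone C) {x : α} (hx : ∃ k, x ∉ C k) {k : ℕ} :
    k < exitIndex C x ↔ x ∈ C k := by
  refine ⟨fun hk => not_not.mp (Nat.notMem_of_lt_sInf hk), fun hk => ?_⟩
  by_contra! hle
  exact Nat.sInf_mem hx (hC hle hk)

variable [MeasurableSpace α]

lemma measurable_exitIndex (hC : Antitone C) (hexit : ∀ x, ∃ k, x ∉ C k)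
    (hCm : ∀ k, MeasurableSet (C k)) : Measurable (exitIndex C) := by
  refine measurable_of_Ioi fun k => ?_
  have hpre : exitIndex C ⁻¹' Set.Ioi k = C k := Set.ext fun x => lt_exitIndex_iff hC (hexit x)
  exact hpre ▸ hCm k

lemma lintegral_comp_exitIndex_le (μ : Measure α) (hC : Antitone C) (hexit : ∀ x, ∃ k, x ∉ C k)
    (hCm : ∀ k, MeasurableSet (C k)) {g : ℕ → ENNReal} (hg : g 0 = 0) :
    ∫⁻ x, g (exitIndex C x) ∂μ ≤ ∑' k, g (k + 1) * μ (C k) := by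
  calc ∫⁻ x, g (exitIndex C x) ∂μ
      ≤ ∫⁻ x, ∑' k, (C k).indicator (fun _ => g (k + 1)) x ∂μ := by
        refine lintegral_mono fun x => ?_
        rcases hk : exitIndex C x with _ | k
        · simp [hg]
        · have hxk : x ∈ C k := (lt_exitIndex_iff hC (hexit x)).mp (by omega)
          refine le_of_eq_of_le ?_ (ENNReal.le_tsum k)
          rw [Set.indicator_of_mem hxk]
    _ = ∑' k, g (k + 1) * μ (C k) := by
        rw [lintegral_tsum fun k => (measurable_const.indicator (hCm k)).aemeasurable]
        simp only [lintegral_indicator_const (hCm _)]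

end ExitIndex

lemma memOrlicz_comp_exitIndex {d : ℕ} {Q : YoungFunction} {C : ℕ → Set (Fin d → ℝ)}
    (hC : Antitone C) (hexit : ∀ x, ∃ k, x ∉ C k) (hCm : ∀ k, MeasurableSet (C k)) {s : ℕ → ℝ}
    (hs0 : s 0 = 0) (hs : Monotone s)
    (hQs : ∀ k, Q.toFun (s (k + 1)) * (cubeMeasure d).real (C k) ≤ (1 / 2) ^ (k + 1)) :
    MemOrlicz Q fun x => s (exitIndex C x) := by
  refine .of_lintegral_le_one ((measurable_of_countable s).comp (measurable_exitIndex hC hexit hCm))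
    (fun x => hs0 ▸ hs (Nat.zero_le _)) ?_
  have hterm : ∀ k, ENNReal.ofReal (Q.toFun (s (k + 1))) * cubeMeasure d (C k) ≤ 2⁻¹ ^ (k + 1) := by
    intro k
    have hle := ENNReal.ofReal_le_ofReal (hQs k)
    rwa [ENNReal.ofReal_mul (Q.nonneg _), ofReal_measureReal, ENNReal.ofReal_pow (by norm_num),
      one_div, ENNReal.ofReal_inv_of_pos two_pos, ENNReal.ofReal_ofNat] at hle
  calc ∫⁻ x, ENNReal.ofReal (Q.toFun (s (exitIndex C x))) ∂cubeMeasure d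
      ≤ ∑' k, ENNReal.ofReal (Q.toFun (s (k + 1))) * cubeMeasure d (C k) :=
        lintegral_comp_exitIndex_le _ hC hexit hCm (g := fun k => ENNReal.ofReal (Q.toFun (s k)))
          (by simp [hs0, Q.map_zero])
    _ ≤ ∑' k, 2⁻¹ ^ (k + 1) := ENNReal.tsum_le_tsum hterm
    _ = 1 := by
        rw [ENNReal.tsum_geometric_add_one, ENNReal.one_sub_inv_two, inv_inv,
          ENNReal.inv_mul_cancel two_ne_zero ENNReal.ofNat_ne_top]

lemma exists_memOrlicz_forall_le_integral_abs_mixedLogMean {d : ℕ} (hd : 1 ≤ d)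
    (B : Finset (Fin d)) {Q : YoungFunction}
    (hQ : ∀ c > 0, ∃ᶠ u in atTop, Q.toFun u < c * (u * Real.log (1 + u) ^ B.card)) :
    ∃ f : (Fin d → ℝ) → ℝ, MemOrlicz Q f ∧ ∀ k : ℕ, ∃ n ≥ k,
      (k : ℝ) ≤ ∫ x, |mixedLogMean B f (fun _ => n) x| ∂cubeMeasure d := by
  obtain ⟨s, N, hs0, hs, hN, hQs, hsN⟩ := YoungFunction.exists_heights_and_scales hQ
    (one_lt_pow₀ (by norm_num : (1 : ℝ) < 4) (by omega : d ≠ 0)) (by norm_num : (0 : ℝ) < 1 / 48)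
  have hkN : ∀ k, k + 1 ≤ N (k + 1) := fun k => hN.le_apply
  let C (k : ℕ) : Set (Fin d → ℝ) := dyadicCube d (2 * N (k + 1) + 2)
  have hC : Antitone C := fun i j hij => dyadicCube_antitone d <| by
    linarith [hN.monotone (Nat.succ_le_succ hij)]
  have hexit : ∀ x, ∃ k, x ∉ C k := fun x =>
    let ⟨m, hm⟩ := exists_notMem_dyadicCube hd x
    ⟨m, fun hx => hm (dyadicCube_antitone d (by linarith [hkN m]) hx)⟩
  have hlayer {k : ℕ} {x : Fin d → ℝ} : k < exitIndex C x ↔ x ∈ C k :=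
    lt_exitIndex_iff hC (hexit x)
  have hvol (k : ℕ) : (cubeMeasure d).real (C k) = 1 / (4 ^ d) ^ (N (k + 1) + 1) :=
    cubeMeasure_real_dyadicCube_two_mul_add_two d _
  have hf : MemOrlicz Q fun x => s (exitIndex C x) := by
    refine memOrlicz_comp_exitIndex hC hexit (fun k => measurableSet_dyadicCube d _) hs0 hs
      fun k => ?_
    rw [hvol, mul_one_div, div_le_iff₀ (by positivity)]
    exact hQs k
  have hs_nonneg (k : ℕ) : 0 ≤ s k := hs0 ▸ hs k.zero_le
  refine ⟨_, hf, fun k => ⟨pIdx (N (k + 1)), by linarith [hkN k, le_pIdx (N (k + 1))], ?_⟩⟩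
  refine le_trans ?_ (le_integral_abs_mixedLogMean (t := s k) (u := s (k + 1))
    (by linarith [hkN k]) hf.integrable (hs_nonneg k) (fun x hx => ?_) (fun x hx => ?_) B)
  · rw [le_sub_iff_add_le, div_mul_eq_mul_div, le_div_iff₀ (by positivity)]
    simpa only [one_div_mul_eq_div] using hsN k
  · rw [abs_of_nonneg (hs_nonneg _)]
    exact hs (not_lt.mp (hlayer.not.mpr hx))
  · exact hs (hlayer.mpr hx)

/-- Theorem (normdiv, part b). If `L_Q(I^d) ⊄ L log^{|B|} L(I^d)` then there
is `f ∈ L_Q(I^d)` whose means `(L_{n(B)} ∘ R_{n(B')})(f)` do not converge to `f` in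
`L^1(I^d)`-norm. -/
theorem stmt3 (d : ℕ) (hd : 1 ≤ d) (B : Finset (Fin d)) (hB : B.Nonempty)
    (Q : YoungFunction)
    (hQ : ∃ g : (Fin d → ℝ) → ℝ, MemOrlicz Q g ∧
      ¬ Integrable (fun x => |g x| * Real.log (1 + |g x|) ^ B.card) (cubeMeasure d)) :
    ∃ f : (Fin d → ℝ) → ℝ, MemOrlicz Q f ∧ Integrable f (cubeMeasure d) ∧
      ¬ Tendsto (fun n : ℕ => ∫ x, |mixedLogMean B f (fun _ => n) x - f x| ∂(cubeMeasure d))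
        atTop (nhds 0) := by
  obtain ⟨g, hg, hgB⟩ := hQ
  obtain ⟨f, hf, hlarge⟩ := exists_memOrlicz_forall_le_integral_abs_mixedLogMean hd B fun _ =>
    hg.frequently_lt_mul_log_pow hgB
  refine ⟨f, hf, hf.integrable, fun hconv => ?_⟩
  obtain ⟨n₀, hn₀⟩ := eventually_atTop.mp (hconv.eventually_lt_const one_pos)
  obtain ⟨m, hm⟩ := exists_nat_gt (1 + ∫ x, |f x| ∂cubeMeasure d)
  obtain ⟨n, hn, hle⟩ := hlarge (max m n₀)
  have htriangle :=
    integral_abs_le_integral_abs_sub_add (integrable_mixedLogMean f B fun _ => n) hf.integrable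
  have hclose := hn₀ n (le_of_max_le_right hn)
  have hm_le : (m : ℝ) ≤ (max m n₀ : ℕ) := by exact_mod_cast le_max_left m n₀
  linarith

end
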